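/- Let (E, 𝓕, μ) be a probability space, (𝒳_i)_{i≥0} measurable spaces, X_i : E → 𝒳_i measurable, 𝒴_n = ∏_{j≥n} 𝒳_j and X̄_n(x) = (X_n(x), X_{n+1}(x), ...). Let (δ_n) be nonnegative reals, r : E → [0,∞) with ∫ r dμ = 1 satisfying the decorrelation property with constant K ≥ 0 relative to (δ_n), and ν the probability measure dν = r dμ. Let g_j : 𝒴_j → ℝ be measurable with g_j∘X̄_j ∈ L²(μ), set G_j = g_j∘X̄_j − ∫ g_j∘X̄_j dμ and S̄_n = Σ_{j=0}^{n-1} G_j. Suppose there are s₁ ∈ [1,∞], s₂, s₃ ∈ [1,∞) with 1/s₁ + 1/s₂ + 1/s₃ = 1, with r+1 ∈ L^{s₁}(μ) and G_j G_k ∈ L^{s₂}(μ) for all j, k, and positive numbers M_{k,j}. Then | ∫ S̄_n² dν − ∫ S̄_n² dμ | ≤ 2 𝓥_n, where 𝓥_n = K Σ_{0 ≤ k ≤ j < n} δ_k M_{k,j} + Σ_{0 ≤ k ≤ j < n} ‖r+1‖_{L^{s₁}(μ)} ‖G_j G_k‖_{L^{s₂}(μ)}^{1 + s₂/s₃} M_{k,j}^{−s₂/s₃}.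 -/

import Mathlib

open MeasureTheory Filter Topology Complex
open scoped BigOperators ENNReal RealInnerProductSpace

/-- `X̄ₙ(x) = (Xₙ(x), Xₙ₊₁(x), ...)`. -/
def Xbar {E : Type*} {𝒳 : ℕ → Type*} (X : ∀ i, E → 𝒳 i) (n : ℕ) (x : E) :
    ∀ j, 𝒳 (n + j) := fun j => X (n + j) x

/-- The decorrelation property with constant `K` relative to the rates `δ`: for every `n`
and every bounded measurable `f : 𝒴ₙ → ℂ`,
`|∫ s·(f∘X̄ₙ) dμ − ∫ s dμ · ∫ f∘X̄ₙ dμ| ≤ K · sup|f| · δₙ`. -/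
def Decorrelates {E : Type*} [MeasurableSpace E] (μ : Measure E) {𝒳 : ℕ → Type*}
    [∀ i, MeasurableSpace (𝒳 i)] (X : ∀ i, E → 𝒳 i) (s : E → ℝ) (K : ℝ) (δ : ℕ → ℝ) : Prop :=
  ∀ (n : ℕ) (f : (∀ j, 𝒳 (n + j)) → ℂ) (C : ℝ), Measurable f → (∀ y, ‖f y‖ ≤ C) →
    ‖(∫ x, (s x : ℂ) * f (Xbar X n x) ∂μ) -
        ((∫ x, s x ∂μ : ℝ) : ℂ) * ∫ x, f (Xbar X n x) ∂μ‖ ≤ K * C * δ n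

/-- Convergence in distribution (weak convergence of laws) of `Wₙ` under `μ` towards `P`. -/
def TendstoInDistribution {E G : Type*} [MeasurableSpace E] [TopologicalSpace G] [MeasurableSpace G]
    (μ : Measure E) (W : ℕ → E → G) (P : Measure G) : Prop :=
  ∀ h : BoundedContinuousFunction G ℝ,
    Tendsto (fun n => ∫ x, h (W n x) ∂μ) atTop (𝓝 (∫ y, h y ∂P))

/-!
Expanding the square, it suffices to compare `∫ H dν = ∫ r H dμ` with `∫ H dμ` for `H = GⱼG_k`,
`k ≤ j`, and `H` is then a function of `X̄_k`. Truncate `H` at height `A = M_{k,j}`. The truncated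
part is bounded by `A`, so the decorrelation property costs at most `K A δ_k`. The rest is
dominated by `|H|^{1+t} A^{-t}` for every `t ≥ 0`; with `t = s₂/s₃` the exponents `s₁` and
`s₂/(1+t)` are conjugate, and Hölder's inequality against `|r - 1| ≤ r + 1` gives the second term.
-/

open ProbabilityTheory (truncation abs_truncation_le_bound truncation_eq_self)

theorem norm_sum_range_sum_range_le_of_symm {F : Type*} [SeminormedAddCommGroup F]
    {a : ℕ → ℕ → F} (ha : ∀ j k, a j k = a k j) (n : ℕ) :
    ‖∑ j ∈ Finset.range n, ∑ k ∈ Finset.range n, a j k‖ ≤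
      2 * ∑ j ∈ Finset.range n, ∑ k ∈ Finset.range (j + 1), ‖a j k‖ := by
  induction n with
  | zero => simp
  | succ n ih =>
    have peel : ∑ j ∈ Finset.range (n + 1), ∑ k ∈ Finset.range (n + 1), a j k =
        ∑ j ∈ Finset.range n, ∑ k ∈ Finset.range n, a j k +
          ∑ k ∈ Finset.range n, a n k + ∑ k ∈ Finset.range (n + 1), a n k := by
      rw [Finset.sum_range_succ]
      simp only [Finset.sum_range_succ _ n, Finset.sum_add_distrib, ha _ n]
    have row : ‖∑ k ∈ Finset.range n, a n k‖ ≤ ∑ k ∈ Finset.range (n + 1), ‖a n k‖ :=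
      (norm_sum_le _ _).trans
        (Finset.sum_le_sum_of_subset_of_nonneg (by simp) fun _ _ _ => norm_nonneg _)
    have row' : ‖∑ k ∈ Finset.range (n + 1), a n k‖ ≤ ∑ k ∈ Finset.range (n + 1), ‖a n k‖ :=
      norm_sum_le _ _
    rw [peel, Finset.sum_range_succ (fun j => ∑ k ∈ Finset.range (j + 1), ‖a j k‖)]
    linarith [norm_add₃_le (a := ∑ j ∈ Finset.range n, ∑ k ∈ Finset.range n, a j k)
      (b := ∑ k ∈ Finset.range n, a n k) (c := ∑ k ∈ Finset.range (n + 1), a n k)]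

theorem integral_sq_sum {E ι : Type*} [MeasurableSpace E] {μ : Measure E} {s : Finset ι}
    {f : ι → E → ℝ} (hf : ∀ i ∈ s, ∀ j ∈ s, Integrable (fun x => f i x * f j x) μ) :
    ∫ x, (∑ i ∈ s, f i x) ^ 2 ∂μ = ∑ i ∈ s, ∑ j ∈ s, ∫ x, f i x * f j x ∂μ := by
  simp only [sq, Finset.sum_mul_sum]
  rw [integral_finsetSum _ fun i hi => integrable_finsetSum _ (hf i hi)]
  exact Finset.sum_congr rfl fun i hi => integral_finsetSum _ (hf i hi)

section Density

variable {E F : Type*} [MeasurableSpace E] {μ : Measure E} [NormedAddCommGroup F]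
  [NormedSpace ℝ F] {r : E → ℝ} {f : E → F}

theorem integral_withDensity_ofReal (hr : AEMeasurable r μ) (hr0 : 0 ≤ᵐ[μ] r) :
    ∫ x, f x ∂μ.withDensity (fun x => ENNReal.ofReal (r x)) = ∫ x, r x • f x ∂μ := by
  rw [integral_withDensity_eq_integral_toReal_smul₀ hr.ennreal_ofReal (by simp)]
  exact integral_congr_ae (hr0.mono fun x hx => by simp only [ENNReal.toReal_ofReal hx])

theorem integrable_withDensity_ofReal_iff (hr : AEMeasurable r μ) (hr0 : 0 ≤ᵐ[μ] r) :
    Integrable f (μ.withDensity fun x => ENNReal.ofReal (r x)) ↔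
      Integrable (fun x => r x • f x) μ := by
  rw [integrable_withDensity_iff_integrable_smul₀' hr.ennreal_ofReal (by simp)]
  exact integrable_congr (hr0.mono fun x hx => by simp only [ENNReal.toReal_ofReal hx])

end Density

section Holder

variable {E F : Type*} [MeasurableSpace E] {μ : Measure E} [NormedAddCommGroup F]
  {p q : ℝ≥0∞} {s : ℝ} {f : E → ℝ} {g : E → F}

theorem memLp_div_ofReal [IsFiniteMeasure μ] (hs : 1 ≤ s) (hg : MemLp g q μ) :
    MemLp g (q / ENNReal.ofReal s) μ :=
  hg.mono_exponent <| ENNReal.div_le_of_le_mul <|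
    le_mul_of_one_le_right' (ENNReal.one_le_ofReal.2 hs)

theorem memLp_norm_rpow_div_ofReal (hs : 0 < s) (hg : MemLp g q μ) :
    MemLp (fun x => ‖g x‖ ^ s) (q / ENNReal.ofReal s) μ := by
  simpa only [ENNReal.toReal_ofReal hs.le] using hg.norm_rpow_div (ENNReal.ofReal s)

theorem eLpNorm_norm_rpow_div_ofReal (hs : 0 < s) :
    eLpNorm (fun x => ‖g x‖ ^ s) (q / ENNReal.ofReal s) μ = eLpNorm g q μ ^ s := by
  rw [eLpNorm_norm_rpow g hs,
    ENNReal.div_mul_cancel (ENNReal.ofReal_pos.2 hs).ne' ENNReal.ofReal_ne_top]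

theorem integrable_mul_norm_rpow [p.HolderConjugate (q / ENNReal.ofReal s)] (hs : 0 < s)
    (hf : MemLp f p μ) (hg : MemLp g q μ) : Integrable (fun x => f x * ‖g x‖ ^ s) μ :=
  hf.integrable_mul (memLp_norm_rpow_div_ofReal hs hg)

theorem integral_mul_norm_rpow_le [p.HolderConjugate (q / ENNReal.ofReal s)] (hs : 0 < s)
    (hf : MemLp f p μ) (hg : MemLp g q μ) :
    ∫ x, f x * ‖g x‖ ^ s ∂μ ≤ (eLpNorm f p μ).toReal * (eLpNorm g q μ).toReal ^ s := by
  have holder : eLpNorm (fun x => f x * ‖g x‖ ^ s) 1 μ ≤ eLpNorm f p μ * eLpNorm g q μ ^ s := by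
    rw [← eLpNorm_norm_rpow_div_ofReal hs]
    simpa only [Pi.smul_def', Pi.mul_def, smul_eq_mul] using
      eLpNorm_smul_le_mul_eLpNorm (p := p) (r := 1) (memLp_norm_rpow_div_ofReal hs hg).1 hf.1
  calc ∫ x, f x * ‖g x‖ ^ s ∂μ
      ≤ ∫ x, ‖f x * ‖g x‖ ^ s‖ ∂μ := (Real.le_norm_self _).trans (norm_integral_le_integral_norm _)
    _ = (eLpNorm (fun x => f x * ‖g x‖ ^ s) 1 μ).toReal := by
        rw [integral_norm_eq_lintegral_enorm (integrable_mul_norm_rpow hs hf hg).1,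
          eLpNorm_one_eq_lintegral_enorm]
    _ ≤ (eLpNorm f p μ * eLpNorm g q μ ^ s).toReal :=
        ENNReal.toReal_mono
          (ENNReal.mul_ne_top hf.2.ne (ENNReal.rpow_ne_top_of_nonneg hs.le hg.2.ne)) holder
    _ = (eLpNorm f p μ).toReal * (eLpNorm g q μ).toReal ^ s := by
        rw [ENNReal.toReal_mul, ENNReal.toReal_rpow]

theorem integrable_mul_of_memLp_add_one [IsFiniteMeasure μ] [p.HolderConjugate q] {h : E → ℝ}
    (hf : MemLp (fun x => f x + 1) p μ) (hh : MemLp h q μ) :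
    Integrable (fun x => f x * h x) μ := by
  have hf' : MemLp f p μ := by
    simpa only [Pi.sub_def, add_sub_cancel_right] using hf.sub (memLp_const (1 : ℝ))
  exact hf'.integrable_mul hh

theorem holderConjugate_div_ofReal_one_add {s₁ s₂ s₃ : ℝ≥0∞} (hs₂ : s₂ ≠ ∞) (hs₃ : s₃ ≠ ∞)
    (hsum : 1 / s₁ + 1 / s₂ + 1 / s₃ = 1) :
    s₁.HolderConjugate (s₂ / ENNReal.ofReal (1 + s₂.toReal / s₃.toReal)) := by
  have hs₂0 : s₂ ≠ 0 := by rintro rfl; simp at hsum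
  have hs₃0 : s₃ ≠ 0 := by rintro rfl; simp at hsum
  have exponent : ENNReal.ofReal (1 + s₂.toReal / s₃.toReal) = 1 + s₂ / s₃ := by
    rw [ENNReal.ofReal_add zero_le_one (by positivity), ENNReal.ofReal_one, ← ENNReal.toReal_div,
      ENNReal.ofReal_toReal (ENNReal.div_ne_top hs₂ hs₃0)]
  have conjugate : (s₂ / (1 + s₂ / s₃))⁻¹ = s₂⁻¹ + s₃⁻¹ := by
    rw [ENNReal.inv_div (.inr hs₂) (.inr hs₂0), ENNReal.add_div, ← ENNReal.div_right_comm,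
      ENNReal.div_self hs₂0 hs₂, one_div, one_div]
  rw [ENNReal.holderConjugate_iff, exponent, conjugate, ← hsum]
  simp only [one_div, add_assoc]

end Holder

section Truncation

theorem abs_sub_truncation_le_abs {α : Type*} (f : α → ℝ) (A : ℝ) (x : α) :
    |f x - truncation f A x| ≤ |f x| := by
  simp only [truncation, Set.indicator, id, Function.comp_apply]
  split_ifs <;> simp

theorem abs_sub_truncation_le {α : Type*} (f : α → ℝ) {A t : ℝ} (hA : 0 < A) (ht : 0 ≤ t)
    (x : α) : |f x - truncation f A x| ≤ |f x| ^ (1 + t) * A ^ (-t) := by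
  rcases lt_or_ge |f x| A with hlt | hge
  · rw [truncation_eq_self hlt, sub_self, abs_zero]
    positivity
  · have hf : 0 < |f x| := hA.trans_le hge
    have ratio : 1 ≤ |f x| ^ t * A ^ (-t) := by
      rw [Real.rpow_neg hA.le, ← div_eq_mul_inv, one_le_div (by positivity)]
      exact Real.rpow_le_rpow hA.le hge ht
    calc |f x - truncation f A x|
        ≤ |f x| := abs_sub_truncation_le_abs f A x
      _ ≤ |f x| * (|f x| ^ t * A ^ (-t)) := le_mul_of_one_le_right hf.le ratio
      _ = |f x| ^ (1 + t) * A ^ (-t) := by rw [Real.rpow_add hf, Real.rpow_one, mul_assoc]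

variable {E : Type*} [MeasurableSpace E] {μ : Measure E} {r H : E → ℝ} {p q : ℝ≥0∞} {A t : ℝ}

theorem abs_integral_sub_one_mul_sub_truncation_le
    [p.HolderConjugate (q / ENNReal.ofReal (1 + t))] (hA : 0 < A) (ht : 0 ≤ t)
    (hr0 : 0 ≤ᵐ[μ] r) (hr : MemLp (fun x => r x + 1) p μ) (hH : MemLp H q μ) :
    |∫ x, (r x - 1) * (H x - truncation H A x) ∂μ| ≤
      (eLpNorm (fun x => r x + 1) p μ).toReal * (eLpNorm H q μ).toReal ^ (1 + t) * A ^ (-t) := by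
  have ht1 : 0 < 1 + t := by positivity
  have pointwise : ∀ᵐ x ∂μ, ‖(r x - 1) * (H x - truncation H A x)‖ ≤
      (r x + 1) * ‖H x‖ ^ (1 + t) * A ^ (-t) := by
    filter_upwards [hr0] with x (hx : 0 ≤ r x)
    rw [norm_mul, mul_assoc]
    have : |r x - 1| ≤ r x + 1 := abs_le.2 ⟨by linarith, by linarith⟩
    exact mul_le_mul this (abs_sub_truncation_le H hA ht x) (abs_nonneg _) (by positivity)
  calc |∫ x, (r x - 1) * (H x - truncation H A x) ∂μ|
      ≤ ∫ x, (r x + 1) * ‖H x‖ ^ (1 + t) * A ^ (-t) ∂μ :=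
        norm_integral_le_of_norm_le ((integrable_mul_norm_rpow ht1 hr hH).mul_const _) pointwise
    _ = (∫ x, (r x + 1) * ‖H x‖ ^ (1 + t) ∂μ) * A ^ (-t) := integral_mul_const _ _
    _ ≤ _ := by
        gcongr
        exact integral_mul_norm_rpow_le ht1 hr hH

theorem abs_integral_mul_sub_integral_le_truncation_add [IsFiniteMeasure μ]
    [p.HolderConjugate (q / ENNReal.ofReal (1 + t))] (hA : 0 < A) (ht : 0 ≤ t)
    (hr0 : 0 ≤ᵐ[μ] r) (hr : MemLp (fun x => r x + 1) p μ) (hH : MemLp H q μ) :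
    |∫ x, r x * H x ∂μ - ∫ x, H x ∂μ| ≤
      |∫ x, r x * truncation H A x ∂μ - ∫ x, truncation H A x ∂μ| +
        (eLpNorm (fun x => r x + 1) p μ).toReal * (eLpNorm H q μ).toReal ^ (1 + t) *
          A ^ (-t) := by
  have hH' := memLp_div_ofReal (le_add_of_nonneg_right ht) hH
  have hT : MemLp (truncation H A) (q / ENNReal.ofReal (1 + t)) μ := hH.1.memLp_truncation
  have h1q := ENNReal.HolderConjugate.one_le (q / ENNReal.ofReal (1 + t)) p
  have split : ∫ x, r x * H x ∂μ - ∫ x, H x ∂μ =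
      (∫ x, r x * truncation H A x ∂μ - ∫ x, truncation H A x ∂μ) +
        ∫ x, (r x - 1) * (H x - truncation H A x) ∂μ := by
    have hrH := integrable_mul_of_memLp_add_one hr hH'
    have hrT := integrable_mul_of_memLp_add_one hr hT
    have hHi := hH'.integrable h1q
    have hTi := hT.integrable h1q
    have hrHH : Integrable (fun x => r x * H x - H x) μ := hrH.sub hHi
    have hrTT : Integrable (fun x => r x * truncation H A x - truncation H A x) μ := hrT.sub hTi
    have expand : ∀ x, (r x - 1) * (H x - truncation H A x) =
        (r x * H x - H x) - (r x * truncation H A x - truncation H A x) := fun x => by ring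
    simp only [expand]
    rw [integral_sub hrHH hrTT, integral_sub hrH hHi, integral_sub hrT hTi]
    ring
  rw [split]
  exact (abs_add_le _ _).trans
    (by gcongr; exact abs_integral_sub_one_mul_sub_truncation_le hA ht hr0 hr hH)

end Truncation

section Decorrelation

variable {E : Type*} {𝒳 : ℕ → Type*} [∀ i, MeasurableSpace (𝒳 i)] {X : ∀ i, E → 𝒳 i}

/-- The σ-algebra `σ(Xₙ, Xₙ₊₁, ...)` generated by `X̄ₙ`. Measurability with respect to it encodes
"is a measurable function of `X̄ₙ`". -/
abbrev tailSigmaAlgebra (X : ∀ i, E → 𝒳 i) (n : ℕ) : MeasurableSpace E :=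
  MeasurableSpace.comap (Xbar X n) inferInstance

theorem measurable_tailSigmaAlgebra {k m : ℕ} (hkm : k ≤ m) :
    Measurable[tailSigmaAlgebra X k] (X m) := by
  obtain ⟨i, rfl⟩ := Nat.exists_eq_add_of_le hkm
  exact (measurable_pi_apply i).comp (comap_measurable (Xbar X k))

theorem tailSigmaAlgebra_antitone (X : ∀ i, E → 𝒳 i) : Antitone (tailSigmaAlgebra X) :=
  fun k j hkj => Measurable.comap_le <| @measurable_pi_lambda _ _ _ (tailSigmaAlgebra X k) _ _
    fun i => measurable_tailSigmaAlgebra (hkj.trans (Nat.le_add_right j i))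

namespace Decorrelates

variable [MeasurableSpace E] {μ : Measure E} {r : E → ℝ} {K : ℝ} {δ : ℕ → ℝ}

theorem abs_integral_mul_comp_sub_le (hdec : Decorrelates μ X r K δ) {n : ℕ}
    {f : (∀ j, 𝒳 (n + j)) → ℝ} (hf : Measurable f) {C : ℝ} (hC : ∀ y, |f y| ≤ C) :
    |∫ x, r x * f (Xbar X n x) ∂μ - (∫ x, r x ∂μ) * ∫ x, f (Xbar X n x) ∂μ| ≤ K * C * δ n := by
  have complex_bound := hdec n (fun y => (f y : ℂ)) C (by fun_prop)
    (fun y => by simpa only [Complex.norm_real, Real.norm_eq_abs] using hC y)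
  simp only [← Complex.ofReal_mul, integral_complex_ofReal, ← Complex.ofReal_sub,
    Complex.norm_real, Real.norm_eq_abs] at complex_bound
  exact complex_bound

theorem abs_integral_mul_truncation_sub_le (hdec : Decorrelates μ X r K δ) {n : ℕ} {H : E → ℝ}
    (hH : Measurable[tailSigmaAlgebra X n] H) (A : ℝ) :
    |∫ x, r x * truncation H A x ∂μ - (∫ x, r x ∂μ) * ∫ x, truncation H A x ∂μ| ≤
      K * |A| * δ n := by
  obtain ⟨h, hh, rfl⟩ := hH.exists_eq_measurable_comp
  have hmeas : Measurable (truncation h A) := (measurable_id.indicator measurableSet_Ioc).comp hh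
  exact hdec.abs_integral_mul_comp_sub_le hmeas (abs_truncation_le_bound h A)

theorem abs_integral_mul_sub_integral_le [IsFiniteMeasure μ] {p q : ℝ≥0∞} {A t : ℝ}
    [p.HolderConjugate (q / ENNReal.ofReal (1 + t))] (hdec : Decorrelates μ X r K δ)
    (hr0 : 0 ≤ᵐ[μ] r) (hr1 : ∫ x, r x ∂μ = 1) (hr : MemLp (fun x => r x + 1) p μ)
    {n : ℕ} {H : E → ℝ} (hHX : Measurable[tailSigmaAlgebra X n] H) (hH : MemLp H q μ)
    (hA : 0 < A) (ht : 0 ≤ t) :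
    |∫ x, r x * H x ∂μ - ∫ x, H x ∂μ| ≤ K * (δ n * A) +
      (eLpNorm (fun x => r x + 1) p μ).toReal * (eLpNorm H q μ).toReal ^ (1 + t) * A ^ (-t) := by
  have truncated := hdec.abs_integral_mul_truncation_sub_le hHX A
  rw [hr1, one_mul, abs_of_pos hA, mul_assoc, mul_comm A] at truncated
  exact (abs_integral_mul_sub_integral_le_truncation_add hA ht hr0 hr hH).trans (by gcongr)

end Decorrelates

end Decorrelation

theorem second_moment_comparison_general {E : Type*} [MeasurableSpace E] {μ : Measure E}
    [IsFiniteMeasure μ] {𝒳 : ℕ → Type*} [∀ i, MeasurableSpace (𝒳 i)] {X : ∀ i, E → 𝒳 i}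
    {r : E → ℝ} {K : ℝ} {δ : ℕ → ℝ} (hdec : Decorrelates μ X r K δ)
    (hr0 : 0 ≤ᵐ[μ] r) (hr1 : ∫ x, r x ∂μ = 1)
    {G : ℕ → E → ℝ} (hG : ∀ j, Measurable[tailSigmaAlgebra X j] (G j))
    {s₁ s₂ s₃ : ℝ≥0∞} (hs₂ : s₂ ≠ ∞) (hs₃ : s₃ ≠ ∞) (hsum : 1 / s₁ + 1 / s₂ + 1 / s₃ = 1)
    (hr : MemLp (fun x => r x + 1) s₁ μ) (hGG : ∀ j k, MemLp (fun x => G j x * G k x) s₂ μ)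
    {M : ℕ → ℕ → ℝ} (hM : ∀ k j, 0 < M k j) (n : ℕ) :
    |∫ x, (∑ j ∈ Finset.range n, G j x) ^ 2 ∂μ.withDensity (fun x => ENNReal.ofReal (r x)) -
        ∫ x, (∑ j ∈ Finset.range n, G j x) ^ 2 ∂μ| ≤
      2 * (K * (∑ j ∈ Finset.range n, ∑ k ∈ Finset.range (j + 1), δ k * M k j) +
        ∑ j ∈ Finset.range n, ∑ k ∈ Finset.range (j + 1),
          (eLpNorm (fun x => r x + 1) s₁ μ).toReal *
            (eLpNorm (fun x => G j x * G k x) s₂ μ).toReal ^ (1 + s₂.toReal / s₃.toReal) *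
            M k j ^ (-(s₂.toReal / s₃.toReal))) := by
  have conj := holderConjugate_div_ofReal_one_add hs₂ hs₃ hsum
  have ht : 0 ≤ s₂.toReal / s₃.toReal := by positivity
  have hrm : AEMeasurable r μ := by simpa using hr.1.aemeasurable.sub_const 1
  have hGG' j k := memLp_div_ofReal (le_add_of_nonneg_right ht) (hGG j k)
  have hint j k : Integrable (fun x => G j x * G k x) μ :=
    (hGG' j k).integrable (ENNReal.HolderConjugate.one_le _ s₁)
  have hintν j k : Integrable (fun x => G j x * G k x)
      (μ.withDensity fun x => ENNReal.ofReal (r x)) :=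
    (integrable_withDensity_ofReal_iff hrm hr0).2 (integrable_mul_of_memLp_add_one hr (hGG' j k))
  rw [integral_sq_sum fun j _ k _ => hintν j k, integral_sq_sum fun j _ k _ => hint j k]
  simp only [integral_withDensity_ofReal hrm hr0, smul_eq_mul, ← Finset.sum_sub_distrib,
    ← Real.norm_eq_abs]
  refine (norm_sum_range_sum_range_le_of_symm ?_ n).trans ?_
  · exact fun j k => by simp only [mul_comm (G j _)]
  simp only [Finset.mul_sum _ _ K, ← Finset.sum_add_distrib]
  gcongr with j _ k hk
  have hkj : k ≤ j := Nat.lt_succ_iff.1 (Finset.mem_range.1 hk)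
  exact hdec.abs_integral_mul_sub_integral_le hr0 hr1 hr
    (((hG j).mono (tailSigmaAlgebra_antitone X hkj) le_rfl).mul (hG k)) (hGG j k) (hM k j) ht

/-- Second-moment comparison inequality from the proof of Proposition 2.5: with
`Gⱼ = gⱼ∘X̄ⱼ − ∫ gⱼ∘X̄ⱼ dμ` and `S̄ₙ = ∑_{j<n} Gⱼ`, exponents `1/s₁ + 1/s₂ + 1/s₃ = 1`,
`r+1 ∈ L^{s₁}(μ)`, `GⱼG_k ∈ L^{s₂}(μ)` and positive numbers `M_{k,j}`, one has
`|∫ S̄ₙ² dν − ∫ S̄ₙ² dμ| ≤ 2𝓥ₙ` where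
`𝓥ₙ = K ∑_{0≤k≤j<n} δ_k M_{k,j} + ∑_{0≤k≤j<n} ‖r+1‖_{s₁} ‖GⱼG_k‖_{s₂}^{1+s₂/s₃} M_{k,j}^{−s₂/s₃}`. -/
theorem second_moment_comparison
    {E : Type*} [MeasurableSpace E] (μ : Measure E) [IsProbabilityMeasure μ]
    {𝒳 : ℕ → Type*} [∀ i, MeasurableSpace (𝒳 i)]
    (X : ∀ i, E → 𝒳 i) (hX : ∀ i, Measurable (X i))
    (δ : ℕ → ℝ) (hδ0 : ∀ n, 0 ≤ δ n)
    (r : E → ℝ) (hrmeas : Measurable r) (hr0 : ∀ x, 0 ≤ r x) (hr1 : ∫ x, r x ∂μ = 1)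
    (K : ℝ) (hK : 0 ≤ K) (hdec : Decorrelates μ X r K δ)
    (ν : Measure E) (hν : ν = μ.withDensity (fun x => ENNReal.ofReal (r x)))
    (g : ∀ j, (∀ i, 𝒳 (j + i)) → ℝ) (hg : ∀ j, Measurable (g j))
    (hgL2 : ∀ j, MemLp (fun x => g j (Xbar X j x)) 2 μ)
    (G : ℕ → E → ℝ) (hG : ∀ j x, G j x = g j (Xbar X j x) - ∫ y, g j (Xbar X j y) ∂μ)
    (Sbar : ℕ → E → ℝ) (hSbar : ∀ n x, Sbar n x = ∑ j ∈ Finset.range n, G j x)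
    (s₁ s₂ s₃ : ℝ≥0∞) (hs₁ : 1 ≤ s₁) (hs₂ : 1 ≤ s₂) (hs₂' : s₂ ≠ ∞)
    (hs₃ : 1 ≤ s₃) (hs₃' : s₃ ≠ ∞)
    (hsum : 1 / s₁ + 1 / s₂ + 1 / s₃ = 1)
    (hrL : MemLp (fun x => r x + 1) s₁ μ)
    (hGGL : ∀ j k, MemLp (fun x => G j x * G k x) s₂ μ)
    (M : ℕ → ℕ → ℝ) (hM : ∀ k j, 0 < M k j) :
    ∀ n, |(∫ x, (Sbar n x) ^ 2 ∂ν) - ∫ x, (Sbar n x) ^ 2 ∂μ| ≤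
      2 * (K * (∑ j ∈ Finset.range n, ∑ k ∈ Finset.range (j + 1), δ k * M k j) +
        ∑ j ∈ Finset.range n, ∑ k ∈ Finset.range (j + 1),
          (eLpNorm (fun x => r x + 1) s₁ μ).toReal *
            (eLpNorm (fun x => G j x * G k x) s₂ μ).toReal ^ (1 + s₂.toReal / s₃.toReal) *
            M k j ^ (-(s₂.toReal / s₃.toReal))) := by
  subst hν
  simp only [hSbar]
  refine second_moment_comparison_general hdec (.of_forall hr0) hr1 (fun j => ?_)
    hs₂' hs₃' hsum hrL hGGL hM
  rw [funext (hG j)]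
  exact ((hg j).comp (comap_measurable _)).sub_const _
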